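/- Let k ≥ 2 be an integer and ϱ ∈ ℍ. Then for every z ∈ ℍ not in the SL₂(ℤ)-orbit of ϱ, the series defining the Petersson Poincaré series η_{k,ϱ}(z) converges absolutely; moreover, the resulting function satisfies η_{k,ϱ}(γz) = (cz+d)^{2k}·η_{k,ϱ}(z) for every γ = (a b; c d) ∈ SL₂(ℤ) and every z ∈ ℍ ∖ SL₂(ℤ)ϱ, and η_{k,γ₀ϱ} = η_{k,ϱ} for every γ₀ ∈ SL₂(ℤ), i.e. η_{k,ϱ} depends only on the SL₂(ℤ)-orbit of ϱ. -/

import Mathlib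

open Complex ComplexConjugate Metric Set MeasureTheory

noncomputable section

/-- The upper half-plane, as a subset of `ℂ`. -/
def UH : Set ℂ := {z | 0 < z.im}

abbrev SL2Z := Matrix.SpecialLinearGroup (Fin 2) ℤ

/-- The Möbius action `γz = (az+b)/(cz+d)` of `SL₂(ℤ)` on the upper half-plane
(written as a map on `ℂ`). -/
def moeb (γ : SL2Z) (z : ℂ) : ℂ :=
  ((γ.1 0 0 : ℂ) * z + (γ.1 0 1 : ℂ)) / ((γ.1 1 0 : ℂ) * z + (γ.1 1 1 : ℂ))

/-- The `SL₂(ℤ)`-orbit of a point `ϱ`. -/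
def orbit (ϱ : ℂ) : Set ℂ := {z | ∃ γ : SL2Z, z = moeb γ ϱ}

/-- A single term of the Petersson Poincaré series:
`((γz − ϱ)(γz − conj ϱ)/(ϱ − conj ϱ))^(−k) · (cz + d)^(−2k)`. -/
def etaTerm (k : ℕ) (ϱ z : ℂ) (γ : SL2Z) : ℂ :=
  ((moeb γ z - ϱ) * (moeb γ z - conj ϱ) / (ϱ - conj ϱ)) ^ (-(k : ℤ)) *
    ((γ.1 1 0 : ℂ) * z + (γ.1 1 1 : ℂ)) ^ (-(2 * k : ℤ))

/-- The Petersson Poincaré series `η_{k,ϱ}(z)`. -/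
def etaP (k : ℕ) (ϱ z : ℂ) : ℂ := (1 / 2 : ℂ) * ∑' γ : SL2Z, etaTerm k ϱ z γ

lemma den_ne (γ : SL2Z) (z : ℂ) (hz : z.im ≠ 0) :
    (γ.1 1 0 : ℂ) * z + (γ.1 1 1 : ℂ) ≠ 0 := by
  intro h
  have hd := γ.det_coe
  rw [Matrix.det_fin_two] at hd
  have h1 := congrArg Complex.im h
  have h2 := congrArg Complex.re h
  simp at h1 h2
  rcases h1 with h1 | h1
  · have h3 : γ.1 1 1 = 0 := by
      rw [h1] at h2; simpa using h2
    rw [h1, h3] at hd; simp at hd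
  · exact hz h1

lemma det_C (γ : SL2Z) :
    (γ.1 0 0 : ℂ) * (γ.1 1 1 : ℂ) - (γ.1 0 1 : ℂ) * (γ.1 1 0 : ℂ) = 1 := by
  have hd := γ.det_coe
  rw [Matrix.det_fin_two] at hd
  exact_mod_cast hd

lemma moeb_sub (γ : SL2Z) (z w : ℂ) (hz : z.im ≠ 0) (hw : w.im ≠ 0) :
    moeb γ z - moeb γ w = (z - w) / (((γ.1 1 0 : ℂ) * z + (γ.1 1 1 : ℂ)) *
      ((γ.1 1 0 : ℂ) * w + (γ.1 1 1 : ℂ))) := by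
  have h1 := den_ne γ z hz
  have h2 := den_ne γ w hw
  have hd := det_C γ
  unfold moeb
  rw [div_sub_div _ _ h1 h2]
  congr 1
  linear_combination (z - w) * hd

lemma moeb_conj (γ : SL2Z) (z : ℂ) : moeb γ (conj z) = conj (moeb γ z) := by
  simp [moeb]

lemma moeb_im (γ : SL2Z) (z : ℂ) (hz : z.im ≠ 0) :
    (moeb γ z).im = z.im / ‖(γ.1 1 0 : ℂ) * z + (γ.1 1 1 : ℂ)‖ ^ 2 := by
  have h := moeb_sub γ z (conj z) hz (by simpa using hz)
  have h2 : (γ.1 1 0 : ℂ) * conj z + (γ.1 1 1 : ℂ) =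
      conj ((γ.1 1 0 : ℂ) * z + (γ.1 1 1 : ℂ)) := by simp
  rw [moeb_conj, h2, Complex.mul_conj, Complex.normSq_eq_norm_sq, Complex.sub_conj,
    Complex.sub_conj] at h
  have h3 := congrArg Complex.im h
  rw [Complex.div_ofReal_im] at h3
  simp at h3
  rw [mul_div_assoc] at h3
  linarith

lemma den_mul (γ γ' : SL2Z) (z : ℂ) (hz : z.im ≠ 0) :
    ((γ' * γ).1 1 0 : ℂ) * z + ((γ' * γ).1 1 1 : ℂ) =
      ((γ'.1 1 0 : ℂ) * moeb γ z + (γ'.1 1 1 : ℂ)) * ((γ.1 1 0 : ℂ) * z + (γ.1 1 1 : ℂ)) := by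
  have h1 := den_ne γ z hz
  unfold moeb
  rw [add_mul, mul_assoc, div_mul_cancel₀ _ h1]
  simp [Matrix.SpecialLinearGroup.coe_mul, Matrix.mul_apply, Fin.sum_univ_two]
  ring

lemma moeb_mul (γ γ' : SL2Z) (z : ℂ) (hz : z.im ≠ 0) (hz' : (moeb γ z).im ≠ 0) :
    moeb (γ' * γ) z = moeb γ' (moeb γ z) := by
  have h1 := den_ne γ z hz
  have h2 := den_ne γ' _ hz'
  have h3 : ((γ' * γ).1 0 0 : ℂ) * z + ((γ' * γ).1 0 1 : ℂ) =
      ((γ'.1 0 0 : ℂ) * moeb γ z + (γ'.1 0 1 : ℂ)) * ((γ.1 1 0 : ℂ) * z + (γ.1 1 1 : ℂ)) := by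
    unfold moeb
    rw [add_mul, mul_assoc, div_mul_cancel₀ _ h1]
    simp [Matrix.SpecialLinearGroup.coe_mul, Matrix.mul_apply, Fin.sum_univ_two]
    ring
  rw [moeb, den_mul γ γ' z hz, h3, mul_div_mul_right _ _ h1]
  rfl

lemma moeb_im_pos (γ : SL2Z) (z : ℂ) (hz : 0 < z.im) : 0 < (moeb γ z).im := by
  rw [moeb_im γ z hz.ne']
  have := norm_pos_iff.2 (den_ne γ z hz.ne')
  positivity

lemma term_first (k : ℕ) (ϱ z : ℂ) (hz : 0 < z.im) (γ γ' : SL2Z) :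
    etaTerm k ϱ (moeb γ z) γ' =
      ((γ.1 1 0 : ℂ) * z + (γ.1 1 1 : ℂ)) ^ (2 * k) * etaTerm k ϱ z (γ' * γ) := by
  have h1 := den_ne γ z hz.ne'
  unfold etaTerm
  rw [den_mul γ γ' z hz.ne', moeb_mul γ γ' z hz.ne' (moeb_im_pos γ z hz).ne', mul_zpow,
    zpow_neg ((γ.1 1 0 : ℂ) * z + (γ.1 1 1 : ℂ))]
  have : ((γ.1 1 0 : ℂ) * z + (γ.1 1 1 : ℂ)) ^ (2 * (k : ℤ)) =
    ((γ.1 1 0 : ℂ) * z + (γ.1 1 1 : ℂ)) ^ (2 * k) := by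
    exact_mod_cast zpow_natCast ((γ.1 1 0 : ℂ) * z + (γ.1 1 1 : ℂ)) (2 * k)
  rw [this]
  have h5 := pow_ne_zero (2 * k) h1
  field_simp

lemma term_second (k : ℕ) (ϱ z : ℂ) (hϱ : 0 < ϱ.im) (hz : 0 < z.im) (γ₀ γ : SL2Z) :
    etaTerm k (moeb γ₀ ϱ) z (γ₀ * γ) = etaTerm k ϱ z γ := by
  have hw := moeb_im_pos γ z hz
  have hc : (conj ϱ).im ≠ 0 := by simpa using hϱ.ne'
  have h1 := den_ne γ z hz.ne'
  have h2 := den_ne γ₀ _ hw.ne'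
  have h3 := den_ne γ₀ _ hϱ.ne'
  have h4 := den_ne γ₀ _ hc
  have h5 : ϱ - conj ϱ ≠ 0 := by
    rw [Complex.sub_conj]; simpa using hϱ.ne'
  unfold etaTerm
  rw [den_mul γ γ₀ z hz.ne', moeb_mul γ γ₀ z hz.ne' hw.ne', ← moeb_conj,
    moeb_sub _ _ _ hw.ne' hϱ.ne', moeb_sub _ _ _ hw.ne' hc, moeb_sub _ _ _ hϱ.ne' hc]
  rw [neg_mul_eq_mul_neg, zpow_mul, zpow_mul, ← mul_zpow, ← mul_zpow]
  congr 1
  rw [mul_zpow, zpow_ofNat, zpow_ofNat]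
  generalize (γ₀.1 1 0 : ℂ) * moeb γ z + (γ₀.1 1 1 : ℂ) = x at *
  generalize (γ₀.1 1 0 : ℂ) * ϱ + (γ₀.1 1 1 : ℂ) = y at *
  generalize (γ₀.1 1 0 : ℂ) * conj ϱ + (γ₀.1 1 1 : ℂ) = t at *
  field_simp

lemma summable_pow_int (k : ℕ) (hk : 2 ≤ k) :
    Summable fun n : ℤ => ((1 + |(n : ℝ)|) ^ (2 * k))⁻¹ := by
  refine Summable.of_norm_bounded_eventually
    (Real.summable_one_div_int_pow (p := 2 * k) |>.2 (by omega)) ?_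
  refine (Set.finite_singleton (0 : ℤ)).subset ?_
  intro n hn
  by_contra h0
  apply hn
  change ‖((1 + |(n : ℝ)|) ^ (2 * k))⁻¹‖ ≤ 1 / (n : ℝ) ^ (2 * k)
  have h0' : n ≠ 0 := h0
  have : 0 < |(n : ℝ)| := by positivity
  rw [Real.norm_of_nonneg (by positivity), one_div, ← (even_two_mul k).pow_abs (n : ℝ)]
  gcongr
  linarith

lemma summable_lin (k : ℕ) (hk : 2 ≤ k) (z : ℂ) (hz : 0 < z.im) :
    Summable fun x : Fin 2 → ℤ => (‖(x 0 : ℂ) * z + (x 1 : ℂ)‖ ^ (2 * k))⁻¹ := by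
  have hk' : (2 : ℝ) < ((2 * k : ℕ) : ℝ) := by exact_mod_cast (by omega : 2 < 2 * k)
  have h := (EisensteinSeries.summable_one_div_norm_rpow hk').mul_left
    (EisensteinSeries.r ⟨z, hz⟩ ^ (-((2 * k : ℕ) : ℝ)))
  refine Summable.of_nonneg_of_le (fun _ => by positivity) (fun x => ?_) h
  have := EisensteinSeries.summand_bound ⟨z, hz⟩ (by linarith : (0 : ℝ) ≤ ((2 * k : ℕ) : ℝ)) x
  refine le_trans (le_of_eq ?_) this
  rw [Real.rpow_neg (norm_nonneg _), Real.rpow_natCast]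

/-- Indexing of `SL₂(ℤ)` by the bottom row and the integer part of the real part of `γz`. -/
def idx (z : ℂ) (γ : SL2Z) : (Fin 2 → ℤ) × ℤ := (fun i => γ.1 1 i, ⌊(moeb γ z).re⌋)

lemma idx_inj (z : ℂ) (hz : 0 < z.im) : Function.Injective (idx z) := by
  intro γ γ' h
  have hrow := (Prod.mk.inj h).1
  have hfl := (Prod.mk.inj h).2
  have hc : γ.1 1 0 = γ'.1 1 0 := congrFun hrow 0
  have hd : γ.1 1 1 = γ'.1 1 1 := congrFun hrow 1
  have d1 := γ.det_coe
  have d2 := γ'.det_coe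
  rw [Matrix.det_fin_two] at d1 d2
  rw [← hc, ← hd] at d2
  obtain ⟨m, hm⟩ : ∃ m : ℤ, m = γ.1 0 0 * γ'.1 0 1 - γ.1 0 1 * γ'.1 0 0 := ⟨_, rfl⟩
  have ha : γ'.1 0 0 = γ.1 0 0 + m * γ.1 1 0 := by
    rw [hm]; linear_combination γ.1 0 0 * d2 - γ'.1 0 0 * d1
  have hb : γ'.1 0 1 = γ.1 0 1 + m * γ.1 1 1 := by
    rw [hm]; linear_combination γ.1 0 1 * d2 - γ'.1 0 1 * d1
  have hmo : moeb γ' z = moeb γ z + m := by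
    have h1 := den_ne γ z hz.ne'
    unfold moeb
    rw [← hc, ← hd, ha, hb, div_add' _ _ _ h1]
    congr 1
    push_cast
    ring
  have hm0 : m = 0 := by
    rw [hmo] at hfl
    simpa using hfl
  rw [hm0, zero_mul, add_zero] at ha hb
  clear hm hmo hm0 hfl hrow h d1 d2
  ext i j
  fin_cases i <;> fin_cases j <;> simp_all

lemma term_summable (k : ℕ) (hk : 2 ≤ k) (ϱ z : ℂ) (hϱ : 0 < ϱ.im) (hz : 0 < z.im) :
    Summable fun γ : SL2Z => ‖etaTerm k ϱ z γ‖ := by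
  have hg : Summable fun γ : SL2Z =>
      (‖(γ.1 1 0 : ℂ) * z + (γ.1 1 1 : ℂ)‖ ^ (2 * k))⁻¹ *
        ((1 + |(⌊(moeb γ z).re⌋ : ℝ)|) ^ (2 * k))⁻¹ := by
    have h1 : Summable fun x : (Fin 2 → ℤ) × ℤ =>
        (‖(x.1 0 : ℂ) * z + (x.1 1 : ℂ)‖ ^ (2 * k))⁻¹ * ((1 + |(x.2 : ℝ)|) ^ (2 * k))⁻¹ := by
      refine (summable_lin k hk z hz).mul_of_nonneg (summable_pow_int k hk) ?_ ?_
      · intro x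
        exact inv_nonneg.2 (pow_nonneg (norm_nonneg _) _)
      · intro x
        exact inv_nonneg.2 (pow_nonneg (by positivity) _)
    have h2 := h1.comp_injective (idx_inj z hz)
    refine h2.congr fun γ => ?_
    simp only [Function.comp_apply, idx]
  set δ := ϱ.im / 2 with hδ
  have hδ0 : 0 < δ := by positivity
  set M := 1 + |ϱ.re| with hM
  have hM0 : 0 < M := by positivity
  set A := 1 + (1 + M) / δ with hA
  have hA0 : 0 < A := by positivity
  set B := z.im / δ * (1 + M + δ) ^ 2 with hB
  have hB0 : 0 < B := by positivity
  have hn : ∀ γ : SL2Z, |(⌊(moeb γ z).re⌋ : ℝ)| ≤ ‖moeb γ z - ϱ‖ + M := by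
    intro γ
    have h1 := Complex.abs_re_le_norm (moeb γ z - ϱ)
    rw [Complex.sub_re] at h1
    have h2 := Int.floor_le (moeb γ z).re
    have h3 := Int.lt_floor_add_one (moeb γ z).re
    have h4 := abs_le.1 h1
    have h5 := neg_abs_le ϱ.re
    have h6 := le_abs_self ϱ.re
    rw [abs_le]
    constructor <;> linarith
  have hev := hg.tendsto_cofinite_zero.eventually (gt_mem_nhds (show 0 < (B ^ k)⁻¹ by positivity))
  refine Summable.of_norm_bounded_eventually (hg.mul_left ((2 * ϱ.im * A ^ 2) ^ k)) ?_
  filter_upwards [hev] with γ hγ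
  have hN := norm_pos_iff.2 (den_ne γ z hz.ne')
  have him := moeb_im γ z hz.ne'
  have hwpos := moeb_im_pos γ z hz
  have hnγ := hn γ
  unfold etaTerm
  set w := moeb γ z
  set N := ‖(γ.1 1 0 : ℂ) * z + (γ.1 1 1 : ℂ)‖ with hNdef
  set n := |(⌊w.re⌋ : ℝ)|
  have hn0 : 0 ≤ n := abs_nonneg _
  set D := ‖w - ϱ‖ with hD
  have hDδ : δ ≤ D := by
    by_contra hlt
    push Not at hlt
    have h1 := (abs_le.1 (Complex.abs_im_le_norm (w - ϱ))).1
    rw [Complex.sub_im] at h1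
    have h2 : δ < w.im := by linarith
    have h3 : N ^ 2 ≤ z.im / δ := by
      rw [him, lt_div_iff₀ (by positivity)] at h2
      rw [le_div_iff₀ hδ0]; linarith
    have h4 : N ^ 2 * (1 + n) ^ 2 ≤ B := by
      rw [hB]
      gcongr ?_ * ?_ ^ 2
      · linarith
    have h5 : (B ^ k)⁻¹ ≤ (N ^ (2 * k))⁻¹ * ((1 + n) ^ (2 * k))⁻¹ := by
      rw [← mul_inv, pow_mul, pow_mul, ← mul_pow]
      gcongr
    linarith
  have hDA : 1 + n ≤ A * D := by
    have : (1 + M) / δ * δ ≤ (1 + M) / δ * D := by gcongr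
    rw [div_mul_cancel₀ _ hδ0.ne'] at this
    rw [hA]; linarith
  have hDD : D ≤ ‖w - conj ϱ‖ := by
    rw [hD]
    rw [← sq_le_sq₀ (norm_nonneg _) (norm_nonneg _), ← Complex.normSq_eq_norm_sq,
      ← Complex.normSq_eq_norm_sq, Complex.normSq_apply, Complex.normSq_apply]
    simp only [Complex.sub_re, Complex.sub_im, Complex.conj_re, Complex.conj_im]
    nlinarith [mul_pos hwpos hϱ]
  have hD0 : 0 < D := hδ0.trans_le hDδ
  have hρ : ‖ϱ - conj ϱ‖ = 2 * ϱ.im := by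
    rw [Complex.sub_conj, norm_mul, Complex.norm_I, mul_one, Complex.norm_real,
      Real.norm_of_nonneg (by positivity)]
  have hX : (D * ‖w - conj ϱ‖ / (2 * ϱ.im))⁻¹ ≤ 2 * ϱ.im * A ^ 2 * ((1 + n) ^ 2)⁻¹ := by
    have h1 : (1 + n) ^ 2 ≤ A ^ 2 * (D * ‖w - conj ϱ‖) := by
      calc (1 + n) ^ 2 ≤ (A * D) ^ 2 := by gcongr
        _ = A ^ 2 * (D * D) := by ring
        _ ≤ _ := by gcongr
    have h2 : 0 < D * ‖w - conj ϱ‖ := mul_pos hD0 (hD0.trans_le hDD)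
    rw [inv_div, ← div_eq_mul_inv, div_le_div_iff₀ h2 (by positivity)]
    have := mul_le_mul_of_nonneg_left h1 (by positivity : 0 ≤ 2 * ϱ.im)
    linarith
  have hXk := pow_le_pow_left₀ (by positivity) hX k
  rw [norm_norm, norm_mul, norm_zpow, norm_zpow, norm_div, norm_mul, hρ, ← hD, ← hNdef,
    zpow_neg, zpow_neg, zpow_natCast]
  have h7 : N ^ (2 * (k : ℤ)) = N ^ (2 * k) := by exact_mod_cast zpow_natCast N (2 * k)
  rw [h7, ← inv_pow]
  calc _ ≤ (2 * ϱ.im * A ^ 2 * ((1 + n) ^ 2)⁻¹) ^ k * (N ^ (2 * k))⁻¹ := by gcongr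
    _ = _ := by
      rw [mul_pow _ (((1 + n) ^ 2)⁻¹), inv_pow, ← pow_mul]
      ring

/-- For `k ≥ 2` and `ϱ ∈ ℍ`, the Petersson Poincaré series `η_{k,ϱ}` converges absolutely
on `ℍ ∖ SL₂(ℤ)ϱ`, transforms like a modular form of weight `2k` for `SL₂(ℤ)`, and depends
only on the `SL₂(ℤ)`-orbit of `ϱ`. -/
theorem etaP_convergence_and_modularity (k : ℕ) (hk : 2 ≤ k) (ϱ : ℂ) (hϱ : ϱ ∈ UH) :
    (∀ z ∈ UH \ orbit ϱ, Summable fun γ : SL2Z => ‖etaTerm k ϱ z γ‖) ∧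
    (∀ γ : SL2Z, ∀ z ∈ UH \ orbit ϱ,
      etaP k ϱ (moeb γ z) = ((γ.1 1 0 : ℂ) * z + (γ.1 1 1 : ℂ)) ^ (2 * k) * etaP k ϱ z) ∧
    (∀ γ₀ : SL2Z, ∀ z ∈ UH \ orbit ϱ, etaP k (moeb γ₀ ϱ) z = etaP k ϱ z) := by
  have hϱ' : 0 < ϱ.im := hϱ
  refine ⟨fun z hz => term_summable k hk ϱ z hϱ' hz.1, fun γ z hz => ?_, fun γ₀ z hz => ?_⟩
  · have hz' : 0 < z.im := hz.1
    unfold etaP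
    rw [tsum_congr (term_first k ϱ z hz' γ), tsum_mul_left]
    have h : ∑' γ' : SL2Z, etaTerm k ϱ z (γ' * γ) = ∑' γ' : SL2Z, etaTerm k ϱ z γ' :=
      (Equiv.mulRight γ).tsum_eq (fun γ' => etaTerm k ϱ z γ')
    rw [h]
    ring
  · have hz' : 0 < z.im := hz.1
    unfold etaP
    rw [← tsum_congr (term_second k ϱ z hϱ' hz' γ₀)]
    congr 1
    exact ((Equiv.mulLeft γ₀).tsum_eq (fun γ' => etaTerm k (moeb γ₀ ϱ) z γ')).symm
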